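/- Assume σ1 ≠ τ1, Res_x(h1, h1′) = 0, and Res_x(h1′, h1″) ≠ 0. Then h1 has exactly one double root ξ1 and one simple root ξ2 (ξ1 ≠ ξ2), the singular locus Sing equals {(0:1:0), (ξ1:0:1), (ξ2:0:1)}, and Sing has exactly 3 elements. -/

import Mathlib

open MvPolynomial

lemma aux_cubic {k : Type*} [Field k] (h2 : (2:k) ≠ 0) (a b c d : k) (ha : a ≠ 0)
    (hD : b ^ 2 - 3 * a * c ≠ 0)
    (hdisc : b^2*c^2 - 4*a*c^3 - 4*b^3*d - 27*a^2*d^2 + 18*a*b*c*d = 0) :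
    ∃ u v : k, u ≠ v ∧ b = -(a * (2 * u + v)) ∧ c = a * (u^2 + 2*u*v) ∧ d = -(a * u^2 * v) := by
  obtain ⟨D, hDD⟩ : ∃ D, D = b ^ 2 - 3 * a * c := ⟨_, rfl⟩
  rw [← hDD] at hD
  obtain ⟨u, hu⟩ : ∃ u, u = (9*a*d - b*c) / (2 * D) := ⟨_, rfl⟩
  obtain ⟨v, hv⟩ : ∃ v, v = (4*a*b*c - 9*a^2*d - b^3) / (a * D) := ⟨_, rfl⟩
  have hu' : 2 * D * u = 9*a*d - b*c := by rw [hu]; field_simp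
  have hv' : a * D * v = 4*a*b*c - 9*a^2*d - b^3 := by rw [hv]; field_simp
  have e1 : b = -(a * (2 * u + v)) := by
    apply mul_left_cancel₀ hD
    linear_combination a * hu' + hv' + b * hDD
  have e2 : c = a * (u^2 + 2*u*v) := by
    have h4 : (4:k) * D^2 ≠ 0 := by
      have : (4:k) = 2 * 2 := by norm_num
      rw [this]; positivity
    apply mul_left_cancel₀ h4
    have h3 : 4 * D^2 * (a * (u^2 + 2*u*v)) = a * (2*D*u)^2 + 4 * (2*D*u) * (a*D*v) := by ring
    rw [h3, hu', hv', hDD]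
    linear_combination (-9*a) * hdisc
  have e3 : d = -(a * u^2 * v) := by
    have h4 : (4:k) * D^3 ≠ 0 := by
      have : (4:k) = 2 * 2 := by norm_num
      rw [this]; positivity
    apply mul_left_cancel₀ h4
    have h3 : 4 * D^3 * (-(a * u^2 * v)) = -((2*D*u)^2 * (a*D*v)) := by ring
    rw [h3, hu', hv', hDD]
    linear_combination (-(b^3 - 27*a^2*d)) * hdisc
  refine ⟨u, v, ?_, e1, e2, e3⟩
  rintro rfl
  apply hD
  rw [hDD, e1, e2]; ring

lemma aux_homog {k : Type*} [Field k] {n : ℕ} {F : MvPolynomial (Fin 3) k}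
    (hF : F.IsHomogeneous n) (c : k) (v : Fin 3 → k) :
    eval (c • v) F = c ^ n * eval v F := by
  rw [eval_eq, eval_eq, Finset.mul_sum]
  refine Finset.sum_congr rfl fun d hd => ?_
  have hdeg : ∑ i ∈ d.support, d i = n := by
    have := hF (mem_support_iff.mp hd)
    rw [← this, Finsupp.weight_apply, Finsupp.sum]; simp
  simp only [Pi.smul_apply, smul_eq_mul, mul_pow, Finset.prod_mul_distrib,
    Finset.prod_pow_eq_pow_sum, hdeg]
  ring

/-- Two homogeneous polynomials with the same dehomogenization agree. -/
lemma aux_unique {k : Type*} [Field k] [Infinite k] {n : ℕ} {F G : MvPolynomial (Fin 3) k}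
    (hF : F.IsHomogeneous n) (hG : G.IsHomogeneous n)
    (h : aeval ![(X 0 : MvPolynomial (Fin 2) k), X 1, 1] F
      = aeval ![(X 0 : MvPolynomial (Fin 2) k), X 1, 1] G) : F = G := by
  have key : ∀ (P : MvPolynomial (Fin 3) k) (x y : k),
      eval ![x, y] (aeval ![(X 0 : MvPolynomial (Fin 2) k), X 1, 1] P) = eval ![x, y, 1] P := by
    intro P x y
    induction P using MvPolynomial.induction_on with
    | C a => simp
    | add p q hp hq => rw [map_add, map_add, hp, hq, map_add]
    | mul_X p i hp =>
      rw [map_mul, map_mul, hp, map_mul]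
      congr 1
      fin_cases i <;> simp
  have hX : (X 2 : MvPolynomial (Fin 3) k) ≠ 0 := X_ne_zero 2
  apply mul_left_cancel₀ hX
  apply MvPolynomial.funext
  intro v
  simp only [map_mul, eval_X]
  by_cases hv : v 2 = 0
  · simp [hv]
  · congr 1
    have hv' : v = v 2 • ![v 0 / v 2, v 1 / v 2, 1] := by
      ext i; fin_cases i <;> simp <;> field_simp
    rw [hv', aux_homog hF, aux_homog hG, ← key, ← key, h]

lemma aux_case {k : Type*} [Field k]
    (x z a1 a2 a3 a4 b1 b2 b3 b4 : k) (hz : z ≠ 0)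
    (h12 : a1 ≠ a2) (h13 : a1 ≠ a3) (h14 : a1 ≠ a4)
    (g1 : a1 ≠ b1) (g2 : a1 ≠ b2) (g3 : a1 ≠ b3) (g4 : a1 ≠ b4)
    (hx : x - a1 * z = 0)
    (e : ((x - a2*z)*(x-a3*z)*(x-a4*z) + (x - a1*z)*(x-a3*z)*(x-a4*z)
      + (x - a1*z)*(x-a2*z)*(x-a4*z) + (x - a1*z)*(x-a2*z)*(x-a3*z)) *
      ((x - b1*z)*(x-b2*z)*(x-b3*z)*(x-b4*z)) = 0) : False := by
  have f : ∀ t, a1 ≠ t → x - t * z ≠ 0 := by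
    intro t ht h
    apply ht
    apply mul_right_cancel₀ hz
    linear_combination h - hx
  rw [hx] at e
  simp [f _ h12, f _ h13, f _ h14, f _ g1, f _ g2, f _ g3, f _ g4] at e

/-- No affine singular point on a root of the first quartic. -/
lemma aux_quartic {k : Type*} [Field k]
    (x z a1 a2 a3 a4 b1 b2 b3 b4 : k) (hz : z ≠ 0)
    (hd : ([a1, a2, a3, a4, b1, b2, b3, b4] : List k).Pairwise (· ≠ ·))
    (hx : (x - a1*z)*(x-a2*z)*(x-a3*z)*(x-a4*z) = 0)
    (e : ((x - a2*z)*(x-a3*z)*(x-a4*z) + (x - a1*z)*(x-a3*z)*(x-a4*z)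
      + (x - a1*z)*(x-a2*z)*(x-a4*z) + (x - a1*z)*(x-a2*z)*(x-a3*z)) *
      ((x - b1*z)*(x-b2*z)*(x-b3*z)*(x-b4*z)) = 0) : False := by
  simp only [List.pairwise_cons, List.mem_cons, List.not_mem_nil, or_false, forall_eq_or_imp,
    forall_eq] at hd
  obtain ⟨⟨h12, h13, h14, p1, p2, p3, p4⟩, ⟨h23, h24, q1, q2, q3, q4⟩, ⟨h34, r1, r2, r3, r4⟩,
    ⟨s1, s2, s3, s4⟩, -⟩ := hd
  rcases mul_eq_zero.mp hx with hx | hx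
  · rcases mul_eq_zero.mp hx with hx | hx
    · rcases mul_eq_zero.mp hx with hx | hx
      · exact aux_case x z a1 a2 a3 a4 b1 b2 b3 b4 hz h12 h13 h14 p1 p2 p3 p4 hx e
      · exact aux_case x z a2 a1 a3 a4 b1 b2 b3 b4 hz h12.symm h23 h24 q1 q2 q3 q4 hx
          (by linear_combination e)
    · exact aux_case x z a3 a1 a2 a4 b1 b2 b3 b4 hz h13.symm h23.symm h34 r1 r2 r3 r4 hx
        (by linear_combination e)
  · exact aux_case x z a4 a1 a2 a3 b1 b2 b3 b4 hz h14.symm h24.symm h34.symm s1 s2 s3 s4 hx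
      (by linear_combination e)

/-- Case (I-2): if σ1 ≠ τ1, Res_x(h1, h1') = 0 and Res_x(h1', h1'') ≠ 0, then
h1 has a double root ξ1 and a simple root ξ2, and
Sing = {(0:1:0), (ξ1:0:1), (ξ2:0:1)} has exactly 3 elements. -/
theorem stmt_13
    {k : Type*} [Field k] [IsAlgClosed k]
    (p : ℕ) [CharP k p] (hp : p = 0 ∨ 5 ≤ p)
    (α1 α2 α3 α4 β1 β2 β3 β4 : k)
    (hdist : ([α1, α2, α3, α4, β1, β2, β3, β4] : List k).Pairwise (· ≠ ·))
    (σ1 σ2 σ3 σ4 τ1 τ2 τ3 τ4 : k)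
    (hσ1 : σ1 = α1 + α2 + α3 + α4)
    (hσ2 : σ2 = α1 * α2 + α1 * α3 + α1 * α4 + α2 * α3 + α2 * α4 + α3 * α4)
    (hσ3 : σ3 = α1 * α2 * α3 + α1 * α2 * α4 + α1 * α3 * α4 + α2 * α3 * α4)
    (hσ4 : σ4 = α1 * α2 * α3 * α4)
    (hτ1 : τ1 = β1 + β2 + β3 + β4)
    (hτ2 : τ2 = β1 * β2 + β1 * β3 + β1 * β4 + β2 * β3 + β2 * β4 + β3 * β4)
    (hτ3 : τ3 = β1 * β2 * β3 + β1 * β2 * β4 + β1 * β3 * β4 + β2 * β3 * β4)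
    (hτ4 : τ4 = β1 * β2 * β3 * β4)
    (φ1 φ2 f : MvPolynomial (Fin 2) k)
    (hφ1 : φ1 = (X 0 - C α1) * (X 0 - C α2) * (X 0 - C α3) * (X 0 - C α4))
    (hφ2 : φ2 = (X 0 - C β1) * (X 0 - C β2) * (X 0 - C β3) * (X 0 - C β4))
    (hf : f = X 1 ^ 4 - C 2 * (φ1 + φ2) * X 1 ^ 2 + (φ1 - φ2) ^ 2)
    (F : MvPolynomial (Fin 3) k)
    (hFhom : F.IsHomogeneous 6)
    (hFf : aeval ![(X 0 : MvPolynomial (Fin 2) k), X 1, 1] F = f)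
    (Sing : Set (Projectivization k (Fin 3 → k)))
    (hSing : ∀ P : Projectivization k (Fin 3 → k),
      P ∈ Sing ↔ (eval P.rep F = 0 ∧
        eval P.rep (pderiv 0 F) = 0 ∧
        eval P.rep (pderiv 1 F) = 0 ∧
        eval P.rep (pderiv 2 F) = 0))
    (h1 : k → k)
    (hh1 : ∀ x : k, h1 x = (σ1 - τ1) * x ^ 3 - (σ2 - τ2) * x ^ 2 + (σ3 - τ3) * x - (σ4 - τ4))
    -- res1 = Res_x(h1, h1'), the determinant of the Sylvester matrix of the
    -- cubic h1 and its derivative h1'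
    (res1 : k)
    (hres1 : res1 = Matrix.det
      !![σ1 - τ1, -(σ2 - τ2), σ3 - τ3, -(σ4 - τ4), 0;
         0, σ1 - τ1, -(σ2 - τ2), σ3 - τ3, -(σ4 - τ4);
         3 * (σ1 - τ1), -2 * (σ2 - τ2), σ3 - τ3, 0, 0;
         0, 3 * (σ1 - τ1), -2 * (σ2 - τ2), σ3 - τ3, 0;
         0, 0, 3 * (σ1 - τ1), -2 * (σ2 - τ2), σ3 - τ3])
    -- res2 = Res_x(h1', h1''), the determinant of the Sylvester matrix of the
    -- quadratic h1' and the linear h1''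
    (res2 : k)
    (hres2 : res2 = Matrix.det
      !![3 * (σ1 - τ1), -2 * (σ2 - τ2), σ3 - τ3;
         6 * (σ1 - τ1), -2 * (σ2 - τ2), 0;
         0, 6 * (σ1 - τ1), -2 * (σ2 - τ2)])
    (hστ : σ1 ≠ τ1) (hr1 : res1 = 0) (hr2 : res2 ≠ 0) :
    ∃ ξ1 ξ2 : k, ξ1 ≠ ξ2
      ∧ (∀ x : k, h1 x = (σ1 - τ1) * (x - ξ1) ^ 2 * (x - ξ2))
      ∧ Sing = {Projectivization.mk k (![0, 1, 0] : Fin 3 → k)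
                  (by intro hc; simpa using congrFun hc 1),
                Projectivization.mk k (![ξ1, 0, 1] : Fin 3 → k)
                  (by intro hc; simpa using congrFun hc 2),
                Projectivization.mk k (![ξ2, 0, 1] : Fin 3 → k)
                  (by intro hc; simpa using congrFun hc 2)}
      ∧ Sing.ncard = 3 := by
  
  have hk2 : ((2:ℕ):k) ≠ 0 := by
    intro h
    rw [CharP.cast_eq_zero_iff k p] at h
    rcases hp with rfl | hp
    · simp at h
    · have := Nat.le_of_dvd (by norm_num) h; omega
  have hk2 : (2:k) ≠ 0 := by exact_mod_cast hk2
  have ha : σ1 - τ1 ≠ 0 := sub_ne_zero.mpr hστ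
  have hdisc : res1 = -((σ1 - τ1) * ((-(σ2-τ2))^2*(σ3-τ3)^2 - 4*(σ1-τ1)*(σ3-τ3)^3
      - 4*(-(σ2-τ2))^3*(-(σ4-τ4)) - 27*(σ1-τ1)^2*(-(σ4-τ4))^2
      + 18*(σ1-τ1)*(-(σ2-τ2))*(σ3-τ3)*(-(σ4-τ4)))) := by
    rw [hres1]
    generalize σ1 - τ1 = a
    generalize σ2 - τ2 = b
    generalize σ3 - τ3 = c
    generalize σ4 - τ4 = d
    simp [Matrix.det_succ_row_zero, Fin.sum_univ_succ, Fin.succAbove]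
    ring
  have hD : (-(σ2-τ2))^2 - 3*(σ1-τ1)*(σ3-τ3) ≠ 0 := by
    intro h
    apply hr2
    rw [hres2, Matrix.det_fin_three]
    simp
    linear_combination (-12*(σ1-τ1)) * h
  rw [hr1] at hdisc
  have hdisc' := (mul_eq_zero.mp (neg_eq_zero.mp hdisc.symm)).resolve_left ha
  obtain ⟨u, v, huv, e1, e2, e3⟩ := aux_cubic hk2 _ _ _ _ ha hD hdisc'
  have hfac : ∀ x : k, h1 x = (σ1 - τ1) * (x - u) ^ 2 * (x - v) := by
    intro x
    rw [hh1]
    linear_combination x^2 * e1 + x * e2 + e3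
  obtain ⟨a, haa⟩ : ∃ a, a = σ1 - τ1 := ⟨_, rfl⟩
  rw [← haa] at ha e1 e2 e3
  -- zH = Φ2 - Φ1
  have hzH : ∀ x z : k, z * (a * (x - u*z)^2 * (x - v*z)) =
      (x - β1*z)*(x-β2*z)*(x-β3*z)*(x-β4*z) - (x - α1*z)*(x-α2*z)*(x-α3*z)*(x-α4*z) := by
    intro x z
    have h5 : z * (a * (x - u*z)^2 * (x - v*z)) =
      z * ((σ1-τ1)*x^3 - (σ2-τ2)*x^2*z + (σ3-τ3)*x*z^2 - (σ4-τ4)*z^3) := by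
      linear_combination z*x^3*haa - z*x^2*z*e1 - z*x*z^2*e2-z*z^3*e3
    rw [h5, hσ1, hσ2, hσ3, hσ4, hτ1, hτ2, hτ3, hτ4]
    ring
  have hzHx : ∀ x z : k, z * (a * (2 * (x - u * z) * (x - v * z) + (x - u * z) ^ 2)) =
      ((x - β2*z)*(x-β3*z)*(x-β4*z) + (x - β1*z)*(x-β3*z)*(x-β4*z)
            + (x - β1*z)*(x-β2*z)*(x-β4*z) + (x - β1*z)*(x-β2*z)*(x-β3*z))
      - ((x - α2*z)*(x-α3*z)*(x-α4*z) + (x - α1*z)*(x-α3*z)*(x-α4*z)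
            + (x - α1*z)*(x-α2*z)*(x-α4*z) + (x - α1*z)*(x-α2*z)*(x-α3*z)) := by
    intro x z
    have h5 : z * (a * (2 * (x - u * z) * (x - v * z) + (x - u * z) ^ 2)) =
      z * (3*(σ1-τ1)*x^2 - 2*(σ2-τ2)*x*z + (σ3-τ3)*z^2) := by
      linear_combination 3*z*x^2*haa - 2*z*x*z*e1 - z*z^2*e2
    rw [h5, hσ1, hσ2, hσ3, hτ1, hτ2, hτ3]
    ring
  obtain ⟨G, hG⟩ : ∃ G : MvPolynomial (Fin 3) k, G = X 1 ^ 4 * X 2 ^ 2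
    - C 2 * ((X 0 - C α1 * X 2) * (X 0 - C α2 * X 2) * (X 0 - C α3 * X 2) * (X 0 - C α4 * X 2)
      + (X 0 - C β1 * X 2) * (X 0 - C β2 * X 2) * (X 0 - C β3 * X 2) * (X 0 - C β4 * X 2)) * X 1 ^ 2
    + (C a * (X 0 - C u * X 2) ^ 2 * (X 0 - C v * X 2)) ^ 2 := ⟨_, rfl⟩
  have hlin : ∀ t : k, (X 0 - C t * X 2 : MvPolynomial (Fin 3) k).IsHomogeneous 1 := by
    intro t
    refine (isHomogeneous_X _ _).sub ?_
    simpa using (isHomogeneous_C (Fin 3) t).mul (isHomogeneous_X k (2 : Fin 3))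
  have hGhom : G.IsHomogeneous 6 := by
    rw [hG]
    refine ((?_ : IsHomogeneous _ _).sub ?_).add ?_
    · simpa using ((isHomogeneous_X k (1 : Fin 3)).pow 4).mul ((isHomogeneous_X k (2 : Fin 3)).pow 2)
    · have hA := (((hlin α1).mul (hlin α2)).mul (hlin α3)).mul (hlin α4)
      have hB := (((hlin β1).mul (hlin β2)).mul (hlin β3)).mul (hlin β4)
      have := ((isHomogeneous_C (Fin 3) (2:k)).mul (hA.add hB)).mul
        ((isHomogeneous_X k (1 : Fin 3)).pow 2)
      exact this
    · have := (((isHomogeneous_C (Fin 3) a).mul ((hlin u).pow 2)).mul (hlin v)).pow 2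
      exact this
  have : Infinite k := IsAlgClosed.instInfinite
  have hFG : F = G := by
    apply aux_unique hFhom hGhom
    rw [hFf, hf, hφ1, hφ2, hG]
    apply MvPolynomial.funext
    intro w
    have := hzH (w 0) 1
    simp only [mul_one, one_mul] at this
    simp [this]
    ring
  subst hFG
  have hchar : ∀ w : Fin 3 → k, (eval w F = 0 ∧ eval w (pderiv 0 F) = 0 ∧
        eval w (pderiv 1 F) = 0 ∧ eval w (pderiv 2 F) = 0) ↔
        ((w 0 = 0 ∧ w 2 = 0) ∨ (w 1 = 0 ∧ (w 0 - u * w 2) ^ 2 * (w 0 - v * w 2) = 0)) := by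
    intro w
    have E : eval w F = w 1 ^ 4 * w 2 ^ 2
        - 2 * ((w 0 - α1 * w 2) * (w 0 - α2 * w 2) * (w 0 - α3 * w 2) * (w 0 - α4 * w 2)
        + (w 0 - β1 * w 2) * (w 0 - β2 * w 2) * (w 0 - β3 * w 2) * (w 0 - β4 * w 2)) * w 1 ^ 2
        + (a * (w 0 - u * w 2) ^ 2 * (w 0 - v * w 2)) ^ 2 := by
      rw [hG]; simp
    have E0 : eval w (pderiv 0 F) =
        - 2 * (((w 0 - α2 * w 2) * (w 0 - α3 * w 2) * (w 0 - α4 * w 2)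
          + (w 0 - α1 * w 2) * (w 0 - α3 * w 2) * (w 0 - α4 * w 2)
          + (w 0 - α1 * w 2) * (w 0 - α2 * w 2) * (w 0 - α4 * w 2)
          + (w 0 - α1 * w 2) * (w 0 - α2 * w 2) * (w 0 - α3 * w 2))
        + ((w 0 - β2 * w 2) * (w 0 - β3 * w 2) * (w 0 - β4 * w 2)
          + (w 0 - β1 * w 2) * (w 0 - β3 * w 2) * (w 0 - β4 * w 2)
          + (w 0 - β1 * w 2) * (w 0 - β2 * w 2) * (w 0 - β4 * w 2)
          + (w 0 - β1 * w 2) * (w 0 - β2 * w 2) * (w 0 - β3 * w 2))) * w 1 ^ 2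
        + 2 * (a * (w 0 - u * w 2) ^ 2 * (w 0 - v * w 2)) *
          (a * (2 * (w 0 - u * w 2) * (w 0 - v * w 2) + (w 0 - u * w 2) ^ 2)) := by
      rw [hG]; simp [pderiv_X, Derivation.leibniz_pow]; ring
    have E1 : eval w (pderiv 1 F) = 4 * w 1 ^ 3 * w 2 ^ 2
        - 4 * ((w 0 - α1 * w 2) * (w 0 - α2 * w 2) * (w 0 - α3 * w 2) * (w 0 - α4 * w 2)
        + (w 0 - β1 * w 2) * (w 0 - β2 * w 2) * (w 0 - β3 * w 2) * (w 0 - β4 * w 2)) * w 1 := by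
      rw [hG]; simp [pderiv_X, Derivation.leibniz_pow]; ring
    have E2 : ∃ s t : k, eval w (pderiv 2 F) = 2 * w 1 ^ 4 * w 2
        + w 1 * (w 0 * s + w 2 * t)
        + 2 * (a * (w 0 - u * w 2) ^ 2 * (w 0 - v * w 2)) *
          (a * (- 2 * u * (w 0 - u * w 2) * (w 0 - v * w 2) - v * (w 0 - u * w 2) ^ 2)) := by
      refine ⟨2 * w 1 * (α1 * (w 0 - α2 * w 2) * (w 0 - α3 * w 2)
          + α2 * (w 0 - α1 * w 2) * (w 0 - α3 * w 2)
          + α3 * (w 0 - α1 * w 2) * (w 0 - α2 * w 2)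
          + β1 * (w 0 - β2 * w 2) * (w 0 - β3 * w 2)
          + β2 * (w 0 - β1 * w 2) * (w 0 - β3 * w 2)
          + β3 * (w 0 - β1 * w 2) * (w 0 - β2 * w 2)
          + α4 * (w 0 - α1 * w 2) * (w 0 - α2 * w 2)
          + β4 * (w 0 - β1 * w 2) * (w 0 - β2 * w 2)),
        - (2 * w 1 * (α4 * (α1 * (w 0 - α2 * w 2) * (w 0 - α3 * w 2)
          + α2 * (w 0 - α1 * w 2) * (w 0 - α3 * w 2)
          + α3 * (w 0 - α1 * w 2) * (w 0 - α2 * w 2))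
          + β4 * (β1 * (w 0 - β2 * w 2) * (w 0 - β3 * w 2)
          + β2 * (w 0 - β1 * w 2) * (w 0 - β3 * w 2)
          + β3 * (w 0 - β1 * w 2) * (w 0 - β2 * w 2))
          + α4 * α3 * (w 0 - α1 * w 2) * (w 0 - α2 * w 2)
          + β4 * β3 * (w 0 - β1 * w 2) * (w 0 - β2 * w 2))), ?_⟩
      rw [hG]; simp [pderiv_X, Derivation.leibniz_pow]; ring
    obtain ⟨s, t, E2⟩ := E2
    have hH := hzH (w 0) (w 2)
    have hHx := hzHx (w 0) (w 2)
    rw [E, E0, E1, E2]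
    clear E E0 E1 E2
    revert hH hHx
    generalize w 0 = x
    generalize w 1 = y
    generalize w 2 = z
    intro hH hHx
    constructor
    · rintro ⟨E, E0, E1, -⟩
      by_cases hz : z = 0
      · left
        refine ⟨?_, hz⟩
        subst hz
        have e1 : 2 * 2 * 2 * (x ^ 4 * y) = 0 := by linear_combination -E1
        have e2 : x ^ 4 * y = 0 := by simpa [hk2] using e1
        have e3 : a ^ 2 * x ^ 6 = 0 := by linear_combination E + 4 * y * e2
        simpa [ha] using e3
      · right
        by_cases hy : y = 0
        · refine ⟨hy, ?_⟩
          subst hy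
          have e3 : (a * ((x - u * z) ^ 2 * (x - v * z))) ^ 2 = 0 := by linear_combination E
          have e4 := pow_eq_zero_iff (two_ne_zero) |>.mp e3
          exact (mul_eq_zero.mp e4).resolve_left ha
        · exfalso
          obtain ⟨A, hA⟩ : ∃ A, A = (x - α1*z)*(x-α2*z)*(x-α3*z)*(x-α4*z) := ⟨_, rfl⟩
          obtain ⟨B, hB⟩ : ∃ B, B = (x - β1*z)*(x-β2*z)*(x-β3*z)*(x-β4*z) := ⟨_, rfl⟩
          obtain ⟨dA, hA'⟩ : ∃ dA, dA = (x - α2*z)*(x-α3*z)*(x-α4*z)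
            + (x - α1*z)*(x-α3*z)*(x-α4*z)
            + (x - α1*z)*(x-α2*z)*(x-α4*z) + (x - α1*z)*(x-α2*z)*(x-α3*z) := ⟨_, rfl⟩
          obtain ⟨dB, hB'⟩ : ∃ dB, dB = (x - β2*z)*(x-β3*z)*(x-β4*z)
            + (x - β1*z)*(x-β3*z)*(x-β4*z)
            + (x - β1*z)*(x-β2*z)*(x-β4*z) + (x - β1*z)*(x-β2*z)*(x-β3*z) := ⟨_, rfl⟩
          obtain ⟨H, hHH⟩ : ∃ H, H = a * (x - u * z) ^ 2 * (x - v * z) := ⟨_, rfl⟩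
          obtain ⟨dH, hHH'⟩ : ∃ dH, dH = a * (2 * (x - u * z) * (x - v * z) + (x - u * z) ^ 2) :=
            ⟨_, rfl⟩
          rw [← hA, ← hB, ← hHH] at hH
          rw [← hA', ← hB', ← hHH'] at hHx
          rw [← hA, ← hB, ← hHH] at E
          rw [← hA', ← hB', ← hHH, ← hHH'] at E0
          rw [← hA, ← hB] at E1
          have c1 : 2 * 2 * (y * (y ^ 2 * z ^ 2 - (A + B))) = 0 := by linear_combination E1
          have c2 : y ^ 2 * z ^ 2 - (A + B) = 0 := by simpa [hk2, hy] using c1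
          have c3 : 2 * 2 * (A * B) = 0 := by
            linear_combination (-z ^ 2) * E + (y ^ 2 * z ^ 2 - (A + B)) * c2
              + (z * H + (B - A)) * hH
          have c4 : A * B = 0 := by simpa [hk2] using c3
          have c5 : 2 * ((dA + dB) * (A + B) - (B - A) * (dB - dA)) = 0 := by
            linear_combination (-z ^ 2) * E0 - 2 * (dA + dB) * c2 + 2 * z * dH * hH
              + 2 * (B - A) * hHx
          have c6 : 2 * 2 * (dA * B + A * dB) = 0 := by linear_combination c5
          have c7 : dA * B + A * dB = 0 := by simpa [hk2] using c6
          rcases mul_eq_zero.mp c4 with h0 | h0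
          · have c8 : dA * B = 0 := by linear_combination c7 - dB * h0
            rw [hA] at h0
            rw [hA', hB] at c8
            exact aux_quartic x z _ _ _ _ _ _ _ _ hz hdist h0 c8
          · have c8 : dB * A = 0 := by linear_combination c7 - dA * h0
            rw [hB] at h0
            rw [hB', hA] at c8
            refine aux_quartic x z _ _ _ _ _ _ _ _ hz ?_ h0 c8
            have hperm : ([α1, α2, α3, α4] ++ [β1, β2, β3, β4] : List k).Perm
              ([β1, β2, β3, β4] ++ [α1, α2, α3, α4]) := List.perm_append_comm
            exact (hperm.pairwise_iff (fun h => h.symm)).mp hdist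
    · rintro (⟨rfl, rfl⟩ | ⟨rfl, h⟩)
      · simp
      · have h' : a * (x - u * z) ^ 2 * (x - v * z) = 0 := by linear_combination a * h
        rw [h']
        simp
  have hSing' : Sing = {Projectivization.mk k (![0, 1, 0] : Fin 3 → k)
                  (by intro hc; simpa using congrFun hc 1),
                Projectivization.mk k (![u, 0, 1] : Fin 3 → k)
                  (by intro hc; simpa using congrFun hc 2),
                Projectivization.mk k (![v, 0, 1] : Fin 3 → k)
                  (by intro hc; simpa using congrFun hc 2)} := by
    ext P
    rw [hSing, hchar]
    simp only [Set.mem_insert_iff, Set.mem_singleton_iff]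
    constructor
    · intro h
      have hne := P.rep_nonzero
      rw [← P.mk_rep]
      simp only [Projectivization.mk_eq_mk_iff']
      revert h hne
      generalize P.rep = w
      intro h hne
      rcases h with ⟨hx, hz⟩ | ⟨hy, h⟩
      · left
        refine ⟨w 1, ?_⟩
        ext i; fin_cases i <;> simp [hx, hz]
      · right
        rcases mul_eq_zero.mp h with h | h
        · left
          have h := pow_eq_zero_iff (two_ne_zero) |>.mp h
          refine ⟨w 2, ?_⟩
          ext i; fin_cases i <;> simp [hy]
          linear_combination -h
        · right
          refine ⟨w 2, ?_⟩
          ext i; fin_cases i <;> simp [hy]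
          linear_combination -h
    · rintro (rfl | rfl | rfl)
      · obtain ⟨c, hc⟩ := Projectivization.exists_smul_eq_mk_rep k (![0, 1, 0] : Fin 3 → k)
          (by intro hc; simpa using congrFun hc 1)
        rw [← hc]
        left; simp [Units.smul_def]
      · obtain ⟨c, hc⟩ := Projectivization.exists_smul_eq_mk_rep k (![u, 0, 1] : Fin 3 → k)
          (by intro hc; simpa using congrFun hc 2)
        rw [← hc]
        right; simp [Units.smul_def]; left; ring
      · obtain ⟨c, hc⟩ := Projectivization.exists_smul_eq_mk_rep k (![v, 0, 1] : Fin 3 → k)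
          (by intro hc; simpa using congrFun hc 2)
        rw [← hc]
        right; simp [Units.smul_def]; right; ring
  refine ⟨u, v, huv, hfac, hSing', ?_⟩
  rw [hSing', Set.ncard_eq_three]
  refine ⟨_, _, _, ?_, ?_, ?_, rfl⟩
  · rw [Ne, Projectivization.mk_eq_mk_iff']
    rintro ⟨c, hc⟩
    simpa using congrFun hc 1
  · rw [Ne, Projectivization.mk_eq_mk_iff']
    rintro ⟨c, hc⟩
    simpa using congrFun hc 1
  · rw [Ne, Projectivization.mk_eq_mk_iff']
    rintro ⟨c, hc⟩
    have h2 := congrFun hc 2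
    have h0 := congrFun hc 0
    simp at h2 h0
    rw [h2, one_mul] at h0
    exact huv h0.symm
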